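/- For each p ∈ {7, 11}, the group PSL(2,p) contains a pair of subgroups H₁, H₂ of index p that are almost conjugate: H₁ and H₂ are not conjugate in PSL(2,p), yet for every conjugacy class C of PSL(2,p) one has |C ∩ H₁| = |C ∩ H₂|. -/

import Mathlib

/-- `SL(2, 𝔽_p)`: the group of 2×2 matrices of determinant 1 over `ℤ/pℤ`. -/
abbrev SL2 (p : ℕ) := Matrix.SpecialLinearGroup (Fin 2) (ZMod p)

/-- `PSL(2, 𝔽_p)`: the quotient of `SL(2, 𝔽_p)` by its center `{±I}`. -/
abbrev PSL2 (p : ℕ) := SL2 p ⧸ Subgroup.center (SL2 p)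


namespace Sunada

/-- pack four residues into one natural number -/
def cN (p a b c d : ℕ) : ℕ := ((a % p * 16 + b % p) * 16 + c % p) * 16 + d % p

def eA (x : ℕ) : ℕ := x / 4096
def eB (x : ℕ) : ℕ := x / 256 % 16
def eC (x : ℕ) : ℕ := x / 16 % 16
def eD (x : ℕ) : ℕ := x % 16

def mask : List ℕ → ℕ
  | [] => 0
  | c :: l => mask l ||| (1 <<< c)

lemma testBit_mask (L : List ℕ) (c : ℕ) : (mask L).testBit c = true ↔ c ∈ L := by
  induction L with
  | nil => simp [mask]
  | cons a l ih =>
    simp only [mask, Nat.testBit_or, Bool.or_eq_true, ih, List.mem_cons, Nat.one_shiftLeft,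
      Nat.testBit_two_pow, decide_eq_true_eq]
    tauto

def chkMul (p : ℕ) (L : List ℕ) : Bool :=
  L.all fun x => L.all fun y => (mask L).testBit
    (cN p (eA x * eA y + eB x * eC y) (eA x * eB y + eB x * eD y)
      (eC x * eA y + eD x * eC y) (eC x * eB y + eD x * eD y))

def chkInv (p : ℕ) (L : List ℕ) : Bool :=
  L.all fun x => (mask L).testBit
    (cN p (eD x) ((p - 1) * eB x) ((p - 1) * eC x) (eA x))

def chkCenter (p : ℕ) (L : List ℕ) : Bool :=
  (mask L).testBit (cN p 1 0 0 1) && (mask L).testBit (cN p (p - 1) 0 0 (p - 1))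

def chkSurj (p : ℕ) (L : List ℕ) : Bool :=
  (List.range p).all fun a => (List.range p).all fun b => (List.range p).all fun c =>
    (List.range p).all fun d =>
      !(Nat.beq ((a * d + (p - 1) * (b * c)) % p) 1) ||
        (List.range p).any fun i => (mask L).testBit (cN p (a + i * c) (b + i * d) c d)

def chkInj (p : ℕ) (L : List ℕ) : Bool :=
  (List.range p).all fun i => Nat.beq i 0 || !((mask L).testBit (cN p 1 i 0 1))

def chkNon (p : ℕ) (L : List ℕ) : Bool :=
  (List.range p).all fun i => L.any fun x =>
    Nat.beq ((eA x * eD x + (p - 1) * (eB x * eC x)) % p) 1 &&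
    Nat.beq (cN p (eA x) (eB x) (eC x) (eD x)) x && !((mask L).testBit
    (cN p (eA x + i * eC x)
      ((p - 1) * (eB x + i * eD x + (p - 1) * i * (eA x + i * eC x)))
      ((p - 1) * eC x) (eD x + (p - 1) * i * eC x)))

def chkConj (p : ℕ) (L : List ℕ) : Bool :=
  L.all fun x => (Nat.beq (eB x) 0 && Nat.beq (eC x) 0) ||
    (List.range p).any fun s => (List.range p).any fun t =>
      Nat.beq ((s * s + s * t * (eA x + eD x) + t * t + 1) % p) 0

def L7 : List ℕ :=
  [353, 566, 800, 1104, 1345, 1558, 4097, 4438, 4656, 4934, 5154, 5475, 5648, 8228, 8498, 8725,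
  9041, 9220, 9573, 9794, 12325, 12612, 12817, 13156, 13317, 13652, 13876, 16466, 16707, 16931,
  17154, 17427, 17766, 17971, 20563, 20789, 21010, 21251, 21542, 21858, 22085, 24582, 24928,
  25108, 25429, 25649, 25920, 26145]

def L11 : List ℕ :=
  [424, 600, 880, 1153, 1322, 1681, 1850, 2112, 2403, 2579, 4097, 4506, 4778, 4995, 5210, 5408,
  5699, 5936, 6169, 6521, 6758, 8262, 8553, 8761, 8966, 9362, 9641, 9864, 10018, 10266, 10618,
  10841, 12308, 12704, 12880, 13128, 13461, 13681, 13961, 14183, 14385, 14596, 14887, 16547,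
  16662, 16899, 17303, 17479, 17716, 18052, 18280, 18550, 18774, 18984, 20553, 20759, 21142,
  21257, 21670, 21894, 22070, 22307, 22647, 22871, 23146, 24690, 24913, 25188, 25412, 25752,
  25989, 26165, 26389, 26626, 26917, 27300, 28696, 29075, 29285, 29509, 29779, 30007, 30343,
  30580, 30756, 30984, 31397, 32935, 33172, 33287, 33674, 33876, 34098, 34378, 34598, 34931,
  35168, 35344, 36981, 37218, 37441, 37793, 38041, 38195, 38418, 38697, 38917, 39298, 39506,
  40970, 41301, 41538, 41890, 42112, 42360, 42640, 42849, 43064, 43281, 43553]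

section

variable {p : ℕ} [Fact p.Prime]

lemma neg_cast : ((p - 1 : ℕ) : ZMod p) = -1 := by
  have h : 1 ≤ p := (Fact.out : p.Prime).one_lt.le
  rw [Nat.cast_sub h]; simp

def code (A : SL2 p) : ℕ := cN p (A 0 0).val (A 0 1).val (A 1 0).val (A 1 1).val

lemma code_eq (A : SL2 p) (a b c d : ℕ) (ha : (a : ZMod p) = A 0 0) (hb : (b : ZMod p) = A 0 1)
    (hc : (c : ZMod p) = A 1 0) (hd : (d : ZMod p) = A 1 1) : cN p a b c d = code A := by
  unfold code
  rw [← ha, ← hb, ← hc, ← hd]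
  simp [cN, ZMod.val_natCast]

lemma decode (hp : p ≤ 16) (A : SL2 p) : eA (code A) = (A 0 0).val ∧ eB (code A) = (A 0 1).val ∧
    eC (code A) = (A 1 0).val ∧ eD (code A) = (A 1 1).val := by
  have h1 := ZMod.val_lt (A 0 0)
  have h2 := ZMod.val_lt (A 0 1)
  have h3 := ZMod.val_lt (A 1 0)
  have h4 := ZMod.val_lt (A 1 1)
  simp only [code, cN, eA, eB, eC, eD, Nat.mod_eq_of_lt h1, Nat.mod_eq_of_lt h2,
    Nat.mod_eq_of_lt h3, Nat.mod_eq_of_lt h4]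
  omega

lemma decodeZ (hp : p ≤ 16) (A : SL2 p) : (eA (code A) : ZMod p) = A 0 0 ∧
    (eB (code A) : ZMod p) = A 0 1 ∧
    (eC (code A) : ZMod p) = A 1 0 ∧ (eD (code A) : ZMod p) = A 1 1 := by
  obtain ⟨h1, h2, h3, h4⟩ := decode hp A
  rw [h1, h2, h3, h4]
  simp

lemma det_eq (A : SL2 p) : A 0 0 * A 1 1 - A 0 1 * A 1 0 = 1 := by
  have := A.det_coe
  rwa [Matrix.det_fin_two] at this

lemma mul_ap (A B : SL2 p) (i j : Fin 2) :
    (A * B) i j = A i 0 * B 0 j + A i 1 * B 1 j := by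
  simp [Matrix.mul_apply, Fin.sum_univ_two]

/-- the subgroup of `SL(2,p)` whose elements have codes in `L` -/
def K (hp : p ≤ 16) (L : List ℕ) (h1 : chkMul p L = true) (h2 : chkInv p L = true)
    (h3 : chkCenter p L = true) : Subgroup (SL2 p) where
  carrier := {A | code A ∈ L}
  mul_mem' := by
    intro A B hA hB
    simp only [Set.mem_ofPred_eq] at *
    simp only [chkMul, List.all_eq_true, testBit_mask] at h1
    have := h1 _ hA _ hB
    obtain ⟨a1, a2, a3, a4⟩ := decodeZ hp A
    obtain ⟨b1, b2, b3, b4⟩ := decodeZ hp B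
    rwa [code_eq (A * B)] at this <;>
      simp [a1, a2, a3, a4, b1, b2, b3, b4, Matrix.mul_apply, Fin.sum_univ_two]
  one_mem' := by
    simp only [Set.mem_ofPred_eq]
    simp only [chkCenter, Bool.and_eq_true, testBit_mask] at h3
    have := h3.1
    rwa [code_eq (1 : SL2 p)] at this <;> simp
  inv_mem' := by
    intro A hA
    simp only [Set.mem_ofPred_eq] at *
    simp only [chkInv, List.all_eq_true, testBit_mask] at h2
    have := h2 _ hA
    obtain ⟨a1, a2, a3, a4⟩ := decodeZ hp A
    rwa [code_eq (A⁻¹)] at this <;>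
      simp [a1, a2, a3, a4, Matrix.SpecialLinearGroup.coe_inv, Matrix.adjugate_fin_two, neg_cast]

/-- upper unipotent matrices -/
def U (i : ZMod p) : SL2 p := ⟨!![1, i; 0, 1], by simp [Matrix.det_fin_two]⟩

/-- the outer automorphism, conjugation by `diag(-1, 1)`, as a function -/
def alF (A : SL2 p) : SL2 p := ⟨!![A 0 0, -A 0 1; -A 1 0, A 1 1], by
  have := det_eq A
  simp [Matrix.det_fin_two, this]⟩

lemma U_ap (i : ZMod p) : (U i : SL2 p) 0 0 = 1 ∧ (U i : SL2 p) 0 1 = i ∧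
    (U i : SL2 p) 1 0 = 0 ∧ (U i : SL2 p) 1 1 = 1 := by
  simp [U]

lemma alF_ap (A : SL2 p) : (alF A) 0 0 = A 0 0 ∧ (alF A) 0 1 = -A 0 1 ∧
    (alF A) 1 0 = -A 1 0 ∧ (alF A) 1 1 = A 1 1 := by
  simp [alF]

lemma alF_alF (A : SL2 p) : alF (alF A) = A := by
  ext i j
  fin_cases i <;> fin_cases j <;> simp [alF]

def al : SL2 p ≃* SL2 p where
  toFun := alF
  invFun := alF
  left_inv := alF_alF
  right_inv := alF_alF
  map_mul' := by
    intro A B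
    ext i j
    fin_cases i <;> fin_cases j <;>
      simp only [Fin.zero_eta, Fin.mk_one, alF_ap, mul_ap] <;> ring

lemma al_ap (A : SL2 p) : (al A) 0 0 = A 0 0 ∧ (al A) 0 1 = -A 0 1 ∧
    (al A) 1 0 = -A 1 0 ∧ (al A) 1 1 = A 1 1 := alF_ap A

lemma isConj_al (A : SL2 p) (s t : ZMod p)
    (h : s * s + s * t * (A 0 0 + A 1 1) + t * t + 1 = 0) : IsConj A (al A) := by
  have hd := det_eq A
  rw [isConj_iff]
  let g : SL2 p := ⟨!![-(s + t * A 0 0), -(t * A 0 1); t * A 1 0, s + t * A 1 1], by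
    rw [Matrix.det_fin_two]
    simp only [Matrix.of_apply, Matrix.cons_val', Matrix.cons_val_zero, Matrix.cons_val_one,
      Matrix.cons_val_fin_one]
    linear_combination -h - t * t * hd⟩
  have e1 : g 0 0 = -(s + t * A 0 0) := rfl
  have e2 : g 0 1 = -(t * A 0 1) := rfl
  have e3 : g 1 0 = t * A 1 0 := rfl
  have e4 : g 1 1 = s + t * A 1 1 := rfl
  refine ⟨g, ?_⟩
  rw [mul_inv_eq_iff_eq_mul]
  ext i j
  fin_cases i <;> fin_cases j <;>
    simp only [Fin.zero_eta, Fin.mk_one, al_ap, mul_ap, e1, e2, e3, e4] <;> ring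

theorem main (hp : p ≤ 16) (L : List ℕ) (h1 : chkMul p L = true) (h2 : chkInv p L = true)
    (h3 : chkCenter p L = true) (h4 : chkSurj p L = true) (h5 : chkInj p L = true)
    (h6 : chkNon p L = true) (h7 : chkConj p L = true) :
    ∃ H₁ H₂ : Subgroup (PSL2 p),
        H₁.index = p ∧ H₂.index = p ∧
        (¬ ∃ g : PSL2 p, Subgroup.map (MulAut.conj g).toMonoidHom H₁ = H₂) ∧
        ∀ x : PSL2 p, Nat.card {y : PSL2 p // IsConj x y ∧ y ∈ H₁} =
          Nat.card {y : PSL2 p // IsConj x y ∧ y ∈ H₂} := by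
  set K₁ : Subgroup (SL2 p) := K hp L h1 h2 h3 with hK₁
  have memK : ∀ A, A ∈ K₁ ↔ code A ∈ L := fun A => Iff.rfl
  -- the center lies in `K₁`
  have hcen : Subgroup.center (SL2 p) ≤ K₁ := by
    intro A hA
    rw [Matrix.SpecialLinearGroup.mem_center_iff] at hA
    obtain ⟨r, hr, hA⟩ := hA
    have hr' : r = 1 ∨ r = -1 := by
      have : r ^ 2 = 1 := by simpa using hr
      rcases mul_eq_zero.mp (show (r - 1) * (r + 1) = 0 by linear_combination this) with h | h
      · exact Or.inl (sub_eq_zero.mp h)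
      · exact Or.inr (eq_neg_of_add_eq_zero_left h)
    have e : ∀ i j, A i j = Matrix.scalar (Fin 2) r i j := fun i j => by rw [hA]
    simp only [chkCenter, Bool.and_eq_true, testBit_mask] at h3
    rw [memK]
    rcases hr' with rfl | rfl
    · have := h3.1
      rwa [code_eq A] at this <;> simp [e]
    · have := h3.2
      rwa [code_eq A] at this <;> simp [e, neg_cast]
  have hsurj : ∀ G : SL2 p, ∃ i, U i * G ∈ K₁ := by
    intro G
    simp only [chkSurj, List.all_eq_true, List.any_eq_true, testBit_mask, List.mem_range,
      Bool.or_eq_true, Bool.not_eq_true'] at h4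
    have := h4 _ (ZMod.val_lt (G 0 0)) _ (ZMod.val_lt (G 0 1)) _ (ZMod.val_lt (G 1 0)) _
      (ZMod.val_lt (G 1 1))
    rcases this with h | ⟨i, -, h⟩
    · exfalso
      have hd := det_eq G
      have h1p := (Fact.out : p.Prime).one_lt
      have : (((G 0 0).val * (G 1 1).val + (p - 1) * ((G 0 1).val * (G 1 0).val) : ℕ) : ZMod p)
          = ((1 : ℕ) : ZMod p) := by
        rw [Nat.cast_add, Nat.cast_mul (p - 1), neg_cast]
        push_cast
        simp only [ZMod.natCast_val, ZMod.cast_id', id_eq]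
        linear_combination hd
      rw [ZMod.natCast_eq_natCast_iff', Nat.mod_eq_of_lt h1p] at this
      rw [this] at h
      simp at h
    · refine ⟨i, ?_⟩
      rw [memK]
      rwa [code_eq (U i * G)] at h <;> simp [U_ap, mul_ap, -Matrix.SpecialLinearGroup.coe_mul]
  have hinj : ∀ i : ZMod p, U i ∈ K₁ → i = 0 := by
    intro i hi
    simp only [chkInj, List.all_eq_true, List.mem_range, Bool.or_eq_true] at h5
    rcases h5 _ (ZMod.val_lt i) with h | h
    · exact (ZMod.val_eq_zero i).mp (Nat.eq_of_beq_eq_true h)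
    · exfalso
      rw [memK, ← code_eq (U i) 1 i.val 0 1, ← testBit_mask] at hi
      · simp [hi] at h
      all_goals simp [U]
  have Umul : ∀ i j : ZMod p, U i * U j = U (i + j) := by
    intro i j
    ext a b
    fin_cases a <;> fin_cases b <;> simp [U_ap, mul_ap, -Matrix.SpecialLinearGroup.coe_mul, add_comm]
  have U0 : (U 0 : SL2 p) = 1 := by
    ext a b
    fin_cases a <;> fin_cases b <;> simp [U]
  have Uinv : ∀ i : ZMod p, (U i)⁻¹ = U (-i) := by
    intro i
    rw [inv_eq_iff_mul_eq_one, Umul, add_neg_cancel, U0]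
  have hidx : K₁.index = p := by
    have hb : Function.Bijective (fun i : ZMod p => (QuotientGroup.mk (U i) : SL2 p ⧸ K₁)) := by
      constructor
      · intro i j hij
        have := QuotientGroup.eq.mp hij
        rw [Uinv, Umul] at this
        have := hinj _ this
        linear_combination -this
      · intro q
        obtain ⟨G, rfl⟩ := QuotientGroup.mk_surjective q
        obtain ⟨i, hi⟩ := hsurj G
        refine ⟨-i, ?_⟩
        apply QuotientGroup.eq.mpr
        rwa [Uinv, neg_neg]
    have := Nat.card_congr (Equiv.ofBijective _ hb)
    rw [Subgroup.index, ← this, Nat.card_zmod]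
  let N := Subgroup.center (SL2 p)
  let H₁ : Subgroup (PSL2 p) := K₁.map (QuotientGroup.mk' N)
  have memH : ∀ A : SL2 p, (QuotientGroup.mk A : PSL2 p) ∈ H₁ ↔ A ∈ K₁ := by
    intro A
    have : Subgroup.comap (QuotientGroup.mk' N) H₁ = K₁ := by
      rw [QuotientGroup.comap_map_mk']
      exact sup_eq_right.mpr hcen
    rw [← this]
    rfl
  have hcon : ∀ A ∈ K₁, IsConj A (al A) := by
    intro A hA
    simp only [chkConj, List.all_eq_true, List.any_eq_true, Bool.or_eq_true,
      Bool.and_eq_true] at h7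
    obtain ⟨a1, a2, a3, a4⟩ := decodeZ hp A
    rcases h7 _ hA with ⟨hb, hc⟩ | ⟨s, -, t, -, h⟩
    · have hb := Nat.eq_of_beq_eq_true hb
      have hc := Nat.eq_of_beq_eq_true hc
      rw [hb] at a2
      rw [hc] at a3
      have : al A = A := by
        ext i j
        fin_cases i <;> fin_cases j <;> simp [al, alF, ← a2, ← a3]
      rw [this]
    · have h := Nat.eq_of_beq_eq_true h
      have h := (ZMod.natCast_eq_zero_iff _ p).mpr (Nat.dvd_of_mod_eq_zero h)
      push_cast at h
      rw [a1, a4] at h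
      exact isConj_al A s t h
  let β : PSL2 p ≃* PSL2 p := QuotientGroup.congr N N al
    (Subgroup.characteristic_iff_map_eq.mp inferInstance al)
  have hβ : ∀ A : SL2 p, β (QuotientGroup.mk A) = QuotientGroup.mk (al A) := fun A => rfl
  refine ⟨H₁, H₁.comap β.toMonoidHom, ?_, ?_, ?_, ?_⟩
  · rw [Subgroup.index_map_eq _ (QuotientGroup.mk'_surjective N), hidx]
    rw [QuotientGroup.ker_mk']
    exact hcen
  · rw [Subgroup.index_comap_of_surjective (f := β.toMonoidHom) _ β.surjective,
      Subgroup.index_map_eq _ (QuotientGroup.mk'_surjective N), hidx]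
    rw [QuotientGroup.ker_mk']
    exact hcen
  · rintro ⟨g, hg⟩
    obtain ⟨G, rfl⟩ := QuotientGroup.mk_surjective g
    have hG : ∀ X ∈ K₁, al (G * X * G⁻¹) ∈ K₁ := by
      intro X hX
      rw [← memH, ← hβ]
      have : (MulAut.conj (QuotientGroup.mk G : PSL2 p)).toMonoidHom (QuotientGroup.mk X) ∈
          H₁.comap β.toMonoidHom := by
        rw [← hg]
        exact Subgroup.mem_map_of_mem _ ((memH X).mpr hX)
      exact this
    obtain ⟨j, hj⟩ := hsurj G
    have hU : ∀ X ∈ K₁, al (U (-j) * X * U j) ∈ K₁ := by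
      intro X hX
      have := hG ((U j * G)⁻¹ * X * (U j * G)) (K₁.mul_mem (K₁.mul_mem (K₁.inv_mem hj) hX) hj)
      convert this using 2
      rw [← Uinv]
      group
    simp only [chkNon, List.all_eq_true, List.any_eq_true, List.mem_range,
      Bool.and_eq_true] at h6
    obtain ⟨x, hx, ⟨hdet, hcode⟩, h⟩ := h6 _ (ZMod.val_lt (-j))
    have hdet := Nat.eq_of_beq_eq_true hdet
    have hcode := Nat.eq_of_beq_eq_true hcode
    have hdet' : (eA x : ZMod p) * eD x - eB x * eC x = 1 := by
      have : ((eA x * eD x + (p - 1) * (eB x * eC x) : ℕ) : ZMod p) = ((1 : ℕ) : ZMod p) := by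
        rw [ZMod.natCast_eq_natCast_iff', hdet, Nat.mod_eq_of_lt (Fact.out : p.Prime).one_lt]
      rw [Nat.cast_add, Nat.cast_mul (p - 1), neg_cast] at this
      push_cast at this
      linear_combination this
    let X : SL2 p := ⟨!![(eA x : ZMod p), (eB x : ZMod p); (eC x : ZMod p), (eD x : ZMod p)], by
      rw [Matrix.det_fin_two]
      simpa using hdet'⟩
    have e1 : X 0 0 = eA x := rfl
    have e2 : X 0 1 = eB x := rfl
    have e3 : X 1 0 = eC x := rfl
    have e4 : X 1 1 = eD x := rfl
    have hX : code X = x := by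
      refine Eq.trans (Eq.symm ?_) hcode
      apply code_eq <;> simp [X]
    have hXK := hU X (by rw [memK, hX]; exact hx)
    rw [memK, ← testBit_mask] at hXK
    rw [code_eq (al (U (-j) * X * U j))] at h
    · rw [hXK] at h
      simp at h
    all_goals
      simp only [al_ap, U_ap, mul_ap, e1, e2, e3, e4, Nat.cast_add, Nat.cast_mul, neg_cast,
        ZMod.natCast_val, ZMod.cast_id', id_eq]
      ring
  · intro x
    symm
    refine Nat.card_congr (Equiv.subtypeEquiv β.toEquiv ?_)
    intro a
    obtain ⟨A, rfl⟩ := QuotientGroup.mk_surjective a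
    change _ ∧ β (QuotientGroup.mk A) ∈ H₁ ↔ IsConj x (β (QuotientGroup.mk A)) ∧
      β (QuotientGroup.mk A) ∈ H₁
    refine and_congr_left fun h => ?_
    rw [hβ, memH] at h
    have hc : IsConj (al A) A := by
      have := hcon _ h
      have e : al (al A) = A := alF_alF A
      rwa [e] at this
    have hc' : IsConj (QuotientGroup.mk A : PSL2 p) (β (QuotientGroup.mk A)) :=
      (QuotientGroup.mk' N).map_isConj hc.symm
    exact ⟨fun h => h.trans hc', fun h => h.trans hc'.symm⟩

end

end Sunada

/-- For each `p ∈ {7, 11}`, the group `PSL(2,p)` contains a pair of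
subgroups `H₁, H₂` of index `p` that are almost conjugate: not conjugate in
`PSL(2,p)`, yet `|C ∩ H₁| = |C ∩ H₂|` for every conjugacy class `C` of `PSL(2,p)`. -/
theorem stmt_7 :
    ∀ p : ℕ, (p = 7 ∨ p = 11) →
      ∃ H₁ H₂ : Subgroup (PSL2 p),
        H₁.index = p ∧ H₂.index = p ∧
        (¬ ∃ g : PSL2 p, Subgroup.map (MulAut.conj g).toMonoidHom H₁ = H₂) ∧
        ∀ x : PSL2 p, Nat.card {y : PSL2 p // IsConj x y ∧ y ∈ H₁} =
          Nat.card {y : PSL2 p // IsConj x y ∧ y ∈ H₂} := by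
  rintro p (rfl | rfl)
  · have : Fact (Nat.Prime 7) := ⟨by norm_num⟩
    exact Sunada.main (by norm_num) Sunada.L7 (by decide +kernel) (by decide +kernel)
      (by decide +kernel) (by decide +kernel) (by decide +kernel) (by decide +kernel)
      (by decide +kernel)
  · have : Fact (Nat.Prime 11) := ⟨by norm_num⟩
    exact Sunada.main (by norm_num) Sunada.L11 (by decide +kernel) (by decide +kernel)
      (by decide +kernel) (by decide +kernel) (by decide +kernel) (by decide +kernel)
      (by decide +kernel)
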